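/- arXiv:math/0205064 — 4 statements merged into one kernel-verified Lean document; each statement's English description precedes it below -/
import Mathlib

section
/- Let x1 ≠ x2 be real numbers, n ≥ 1, and let f : ℝ → ℝ be (n−1)-times continuously differentiable on a neighborhood of x1 and on a neighborhood of x2. Let P_n(x) = Σ_{k=0}^{n−1} [a_k(x1,x2)(x−x1) + a_k(x2,x1)(x−x2)]·((x−x1)(x−x2))^k be the two-point Taylor polynomial and set r_n(x) = f(x) − P_n(x). Then r_n(x) = o((x−x1)^{n−1}) as x → x1 and r_n(x) = o((x−x2)^{n−1}) as x → x2. -/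
/-- The two-point Taylor coefficient `a_k(x1, x2)` of a real function `f` at `x1, x2`. -/
noncomputable def twoPointCoeffR (f : ℝ → ℝ) (x1 x2 : ℝ) (k : ℕ) : ℝ :=
  if k = 0 then f x2 / (x2 - x1)
  else ∑ j ∈ Finset.range (k + 1),
    ((Nat.factorial (k + j - 1) : ℝ) / ((Nat.factorial j : ℝ) * (Nat.factorial (k - j) : ℝ))) *
      (((-1 : ℝ) ^ (k + 1) * (k : ℝ) * iteratedDeriv (k - j) f x2
          + (-1 : ℝ) ^ j * (j : ℝ) * iteratedDeriv (k - j) f x1)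
        / ((Nat.factorial k : ℝ) * (x1 - x2) ^ (k + j + 1)))

/-!
Let `f[x₁ᵖ, x₂^q]` be the divided difference of `f` at `p` copies of `x₁` and `q` copies of `x₂`;
it is the sum of the residues of `f(z) / ((z - x₁)ᵖ (z - x₂)^q)` at the two nodes, and so satisfies
`(x₁ - x₂) f[x₁ᵖ⁺¹, x₂^(q+1)] = f[x₁ᵖ⁺¹, x₂^q] - f[x₁ᵖ, x₂^(q+1)]`.
Expanding the residues shows `a_k(x₁, x₂) = -f[x₁ᵏ, x₂ᵏ⁺¹] / (x₁ - x₂)`, so `P_n` is Newton's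
interpolation polynomial with nodes `x₁, x₂, x₁, x₂, …`. On the level of formal Taylor series at
`x₁`, Newton's formula exhibits `f - P_n` as a multiple of `((x - x₁)(x - x₂))ⁿ`; hence `P_n` and
the Taylor polynomial of `f` at `x₁` agree below degree `n`, and Taylor's theorem applies.
Exchanging the nodes does not change `P_n`, which gives the claim at `x₂`.
-/

open PowerSeries Asymptotics Topology

section Algebra

variable {K : Type*} [Field K]

theorem coeff_inv_X_add_C_pow_succ {d : K} (hd : d ≠ 0) (q j : ℕ) :
    coeff j ((X + C d : K⟦X⟧)⁻¹ ^ (q + 1)) = (-1) ^ j * (q + j).choose q / d ^ (q + 1 + j) := by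
  have geometric : (X + C d : K⟦X⟧)⁻¹ = C d⁻¹ * rescale (-d⁻¹) (mk 1) := by
    have one_sub_X : rescale (-d⁻¹) (mk 1) * (1 + C d⁻¹ * X) = (1 : K⟦X⟧) := by
      simpa [rescale_X] using congrArg (rescale (-d⁻¹)) (mk_one_mul_one_sub_eq_one K)
    rw [inv_eq_iff_mul_eq_one (by simpa using hd)]
    have C_inv_mul_C : (C d⁻¹ * C d : K⟦X⟧) = 1 := by simp [← map_mul, hd]
    linear_combination one_sub_X + rescale (-d⁻¹) (mk 1) * C_inv_mul_C
  rw [geometric, mul_pow, ← map_pow, ← map_pow, mk_one_pow_eq_mk_choose_add, coeff_C_mul,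
    coeff_rescale, coeff_mk, neg_pow, inv_pow, inv_pow]
  field_simp
  ring

/-- The residue at `u = 0` of `φ(u) / (uᵖ (u + d)^q)`, i.e. the coefficient of `uᵖ⁻¹` in
`φ(u) (u + d)^(-q)`. The factor `X` shifts the index, so that the residue vanishes for `p = 0`. -/
noncomputable def poleResidue (φ : K⟦X⟧) (d : K) (p q : ℕ) : K :=
  coeff p (X * (φ * (X + C d)⁻¹ ^ q))

theorem poleResidue_zero (φ : K⟦X⟧) (d : K) (q : ℕ) : poleResidue φ d 0 q = 0 := by
  simp [poleResidue]

theorem poleResidue_succ_zero (φ : K⟦X⟧) (d : K) (p : ℕ) :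
    poleResidue φ d (p + 1) 0 = coeff p φ := by
  simp [poleResidue, coeff_succ_X_mul]

theorem mul_poleResidue_succ_succ (φ : K⟦X⟧) {d : K} (hd : d ≠ 0) (p q : ℕ) :
    d * poleResidue φ d (p + 1) (q + 1) =
      poleResidue φ d (p + 1) q - poleResidue φ d p (q + 1) := by
  have cancel : (X + C d : K⟦X⟧) * (X + C d)⁻¹ = 1 :=
    PowerSeries.mul_inv_cancel _ (by simpa using hd)
  have split : X * (φ * (X + C d)⁻¹ ^ q) = X * (X * (φ * (X + C d)⁻¹ ^ (q + 1))) +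
      C d * (X * (φ * (X + C d)⁻¹ ^ (q + 1))) := by
    linear_combination -(X * (φ * (X + C d)⁻¹ ^ q)) * cancel
  simp only [poleResidue]
  rw [split, map_add, coeff_succ_X_mul p (X * _), coeff_C_mul, add_sub_cancel_left]

theorem poleResidue_succ_succ_eq_sum (φ : K⟦X⟧) {d : K} (hd : d ≠ 0) (p q : ℕ) :
    poleResidue φ d (p + 1) (q + 1) = ∑ j ∈ Finset.range (p + 1),
      (-1) ^ j * (q + j).choose q / d ^ (q + 1 + j) * coeff (p - j) φ := by
  rw [poleResidue, coeff_succ_X_mul, mul_comm, coeff_mul,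
    Finset.Nat.sum_antidiagonal_eq_sum_range_succ_mk]
  simp only [coeff_inv_X_add_C_pow_succ hd]

/-- The confluent divided difference `f[x₁, …, x₁, x₂, …, x₂]` with `p` copies of `x₁` and `q`
copies of `x₂`, where `φ` and `ψ` are the Taylor series of `f` at `x₁` and `x₂`, and
`d = x₁ - x₂`. It is encoded as the sum of the residues of `f(z) / ((z - x₁)ᵖ (z - x₂)^q)`. -/
noncomputable def dividedDiff (φ ψ : K⟦X⟧) (d : K) (p q : ℕ) : K :=
  poleResidue φ d p q + poleResidue ψ (-d) q p

theorem dividedDiff_swap (φ ψ : K⟦X⟧) (d : K) (p q : ℕ) :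
    dividedDiff ψ φ (-d) q p = dividedDiff φ ψ d p q := by
  rw [dividedDiff, dividedDiff, neg_neg, add_comm]

theorem dividedDiff_succ_zero (φ ψ : K⟦X⟧) (d : K) (p : ℕ) :
    dividedDiff φ ψ d (p + 1) 0 = coeff p φ := by
  rw [dividedDiff, poleResidue_succ_zero, poleResidue_zero, add_zero]

theorem mul_dividedDiff_succ_succ (φ ψ : K⟦X⟧) {d : K} (hd : d ≠ 0) (p q : ℕ) :
    d * dividedDiff φ ψ d (p + 1) (q + 1) =
      dividedDiff φ ψ d (p + 1) q - dividedDiff φ ψ d p (q + 1) := by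
  simp only [dividedDiff]
  linear_combination mul_poleResidue_succ_succ φ hd p q -
    mul_poleResidue_succ_succ ψ (neg_ne_zero.2 hd) q p

/-- The Taylor series at `x₁` of the Newton remainder `x ↦ f[x, x₁, …, x₁, x₂, …, x₂]` with `p`
copies of `x₁` and `q` copies of `x₂`, in the notation of `dividedDiff`. -/
noncomputable def newtonRemainder (φ ψ : K⟦X⟧) (d : K) (p q : ℕ) : K⟦X⟧ :=
  mk fun i ↦ dividedDiff φ ψ d (p + i + 1) q

theorem coeff_newtonRemainder (φ ψ : K⟦X⟧) (d : K) (p q i : ℕ) :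
    coeff i (newtonRemainder φ ψ d p q) = dividedDiff φ ψ d (p + i + 1) q :=
  coeff_mk _ _

theorem newtonRemainder_zero_zero (φ ψ : K⟦X⟧) (d : K) : newtonRemainder φ ψ d 0 0 = φ := by
  ext i
  rw [coeff_newtonRemainder, zero_add, dividedDiff_succ_zero]

theorem newtonRemainder_eq_C_add_X_mul (φ ψ : K⟦X⟧) (d : K) (p q : ℕ) :
    newtonRemainder φ ψ d p q =
      C (dividedDiff φ ψ d (p + 1) q) + X * newtonRemainder φ ψ d (p + 1) q := by
  ext i
  cases i with
  | zero => simp [coeff_newtonRemainder]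
  | succ i => simp [coeff_newtonRemainder, coeff_succ_X_mul, add_right_comm p 1 i, ← add_assoc]

theorem newtonRemainder_eq_C_add_X_add_C_mul (φ ψ : K⟦X⟧) {d : K} (hd : d ≠ 0) (p q : ℕ) :
    newtonRemainder φ ψ d p q =
      C (dividedDiff φ ψ d p (q + 1)) + (X + C d) * newtonRemainder φ ψ d p (q + 1) := by
  ext i
  have recurrence := mul_dividedDiff_succ_succ φ ψ hd (p + i) q
  cases i with
  | zero =>
    rw [add_mul, map_add, map_add, coeff_zero_C, coeff_zero_X_mul, coeff_C_mul]
    simp only [coeff_newtonRemainder, add_zero] at recurrence ⊢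
    linear_combination -recurrence
  | succ i =>
    rw [add_mul, map_add, map_add, coeff_succ_C, coeff_succ_X_mul, coeff_C_mul]
    simp only [coeff_newtonRemainder, ← add_assoc] at recurrence ⊢
    linear_combination -recurrence

/-- The two-point Taylor coefficient `a_k(x₁, x₂)` as a divided difference, in the notation of
`dividedDiff`. -/
noncomputable def twoPointCoeff (φ ψ : K⟦X⟧) (d : K) (k : ℕ) : K :=
  -dividedDiff φ ψ d k (k + 1) / d

/-- The two-point Taylor polynomial in the variable `X = x - x₁`, in the notation of
`dividedDiff`. -/
noncomputable def twoPointPolynomial (φ ψ : K⟦X⟧) (d : K) (n : ℕ) : Polynomial K :=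
  ∑ k ∈ Finset.range n,
    (.C (twoPointCoeff φ ψ d k) * .X + .C (twoPointCoeff ψ φ (-d) k) * (.X + .C d)) *
      (.X * (.X + .C d)) ^ k

theorem newtonRemainder_diag (φ ψ : K⟦X⟧) {d : K} (hd : d ≠ 0) (k : ℕ) :
    newtonRemainder φ ψ d k k =
      C (twoPointCoeff φ ψ d k) * X + C (twoPointCoeff ψ φ (-d) k) * (X + C d) +
        X * (X + C d) * newtonRemainder φ ψ d (k + 1) (k + 1) := by
  have coeff_mul_d : C (twoPointCoeff φ ψ d k) * C d = -C (dividedDiff φ ψ d k (k + 1)) := by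
    rw [twoPointCoeff, ← map_mul, div_mul_cancel₀ _ hd, map_neg]
  have coeff_swap_mul_d :
      C (twoPointCoeff ψ φ (-d) k) * C d = C (dividedDiff φ ψ d (k + 1) k) := by
    rw [twoPointCoeff, dividedDiff_swap, neg_div_neg_eq, ← map_mul, div_mul_cancel₀ _ hd]
  have C_d_ne_zero : (C d : K⟦X⟧) ≠ 0 := by simpa using hd
  have first_node := newtonRemainder_eq_C_add_X_mul φ ψ d k k
  have second_node := newtonRemainder_eq_C_add_X_add_C_mul φ ψ hd k k
  have recurrence : C d * newtonRemainder φ ψ d (k + 1) (k + 1) =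
      newtonRemainder φ ψ d (k + 1) k - newtonRemainder φ ψ d k (k + 1) := by
    linear_combination newtonRemainder_eq_C_add_X_mul φ ψ d k (k + 1) -
      newtonRemainder_eq_C_add_X_add_C_mul φ ψ hd (k + 1) k
  apply mul_left_cancel₀ C_d_ne_zero
  linear_combination (X + C d) * first_node - X * second_node -
    X * (X + C d) * recurrence - X * coeff_mul_d - (X + C d) * coeff_swap_mul_d

theorem eq_twoPointPolynomial_add (φ ψ : K⟦X⟧) {d : K} (hd : d ≠ 0) (n : ℕ) :
    φ = (twoPointPolynomial φ ψ d n : K⟦X⟧) +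
      (X * (X + C d)) ^ n * newtonRemainder φ ψ d n n := by
  induction n with
  | zero => simp [twoPointPolynomial, newtonRemainder_zero_zero]
  | succ n ih =>
    rw [newtonRemainder_diag φ ψ hd] at ih
    rw [twoPointPolynomial, Finset.sum_range_succ, ← twoPointPolynomial]
    push_cast
    linear_combination ih

theorem coeff_twoPointPolynomial (φ ψ : K⟦X⟧) {d : K} (hd : d ≠ 0) {n i : ℕ} (hi : i < n) :
    (twoPointPolynomial φ ψ d n).coeff i = coeff i φ := by
  conv_rhs => rw [eq_twoPointPolynomial_add φ ψ hd n]
  rw [map_add, Polynomial.coeff_coe, mul_pow, mul_assoc, coeff_X_pow_mul', if_neg hi.not_ge,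
    add_zero]

end Algebra

section Analysis

/-- The formal Taylor series of `f` at `x₀`, in the variable `X = x - x₀`. -/
noncomputable def taylorPowerSeries (f : ℝ → ℝ) (x₀ : ℝ) : ℝ⟦X⟧ :=
  mk fun i ↦ iteratedDeriv i f x₀ / i.factorial

theorem isLittleO_sub_eval_trunc_taylorPowerSeries {f : ℝ → ℝ} {x₀ : ℝ} {m : ℕ}
    (hf : ContDiffAt ℝ m f x₀) :
    (fun x ↦ f x - (trunc (m + 1) (taylorPowerSeries f x₀)).eval (x - x₀))
      =o[𝓝 x₀] fun x ↦ (x - x₀) ^ m := by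
  obtain ⟨s, hs, hfs⟩ := hf.contDiffOn le_rfl (by simp)
  obtain ⟨r, r_pos, ball_subset⟩ := Metric.mem_nhds_iff.1 hs
  have mem_ball : x₀ ∈ Metric.ball x₀ r := Metric.mem_ball_self r_pos
  have taylor := taylor_isLittleO (convex_ball x₀ r) mem_ball (hfs.mono ball_subset)
  rw [Metric.isOpen_ball.nhdsWithin_eq mem_ball] at taylor
  refine taylor.congr_left fun x ↦ ?_
  rw [taylor_within_apply, Polynomial.eval, eval₂_trunc_eq_sum_range]
  congr 1
  refine Finset.sum_congr rfl fun i _ ↦ ?_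
  rw [iteratedDerivWithin_of_isOpen Metric.isOpen_ball mem_ball, taylorPowerSeries, coeff_mk,
    RingHom.id_apply, smul_eq_mul]
  ring

theorem isLittleO_eval_of_X_pow_succ_dvd {𝕜 : Type*} [NormedField 𝕜] {Q : Polynomial 𝕜} {m : ℕ}
    (hQ : Polynomial.X ^ (m + 1) ∣ Q) : (fun u ↦ Q.eval u) =o[𝓝 0] fun u ↦ u ^ m := by
  obtain ⟨R, rfl⟩ := hQ
  have eval_isBigO_one : (fun u ↦ R.eval u) =O[𝓝 0] fun _ ↦ (1 : 𝕜) :=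
    R.continuous.continuousAt.isBigO_one 𝕜
  simpa using (isLittleO_pow_pow m.lt_succ_self).mul_isBigO eval_isBigO_one

theorem isLittleO_sub_eval_of_coeff_eq {f : ℝ → ℝ} {x₀ : ℝ} {m : ℕ} (hf : ContDiffAt ℝ m f x₀)
    {Q : Polynomial ℝ} (hQ : ∀ i < m + 1, Q.coeff i = coeff i (taylorPowerSeries f x₀)) :
    (fun x ↦ f x - Q.eval (x - x₀)) =o[𝓝 x₀] fun x ↦ (x - x₀) ^ m := by
  have X_pow_dvd : Polynomial.X ^ (m + 1) ∣ trunc (m + 1) (taylorPowerSeries f x₀) - Q := by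
    rw [Polynomial.X_pow_dvd_iff]
    intro i hi
    rw [Polynomial.coeff_sub, coeff_trunc, if_pos hi, hQ i hi, sub_self]
  have tendsto_sub : Filter.Tendsto (fun x ↦ x - x₀) (𝓝 x₀) (𝓝 0) :=
    tendsto_sub_nhds_zero_iff.2 Filter.tendsto_id
  have taylor := isLittleO_sub_eval_trunc_taylorPowerSeries hf
  have difference := (isLittleO_eval_of_X_pow_succ_dvd X_pow_dvd).comp_tendsto tendsto_sub
  refine (taylor.add difference).congr_left fun x ↦ ?_
  simp only [Function.comp_apply, Polynomial.eval_sub, sub_add_sub_cancel]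

end Analysis

section Coefficients

theorem neg_poleResidue_div_eq_sum_left (f : ℝ → ℝ) (x : ℝ) {d : ℝ} (hd : d ≠ 0) (m : ℕ) :
    -poleResidue (taylorPowerSeries f x) d (m + 1) (m + 2) / d =
      ∑ j ∈ Finset.range (m + 2), ((m + j).factorial : ℝ) / (j.factorial * (m + 1 - j).factorial) *
        ((-1) ^ j * j * iteratedDeriv (m + 1 - j) f x /
          ((m + 1).factorial * d ^ (m + 1 + j + 1))) := by
  rw [poleResidue_succ_succ_eq_sum _ hd, Finset.sum_range_succ' _ (m + 1),
    ← Finset.sum_neg_distrib, Finset.sum_div]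
  simp only [Nat.cast_zero, mul_zero, zero_mul, zero_div, add_zero]
  refine Finset.sum_congr rfl fun j _ ↦ ?_
  rw [Nat.cast_add_choose, taylorPowerSeries, coeff_mk, Nat.factorial_succ j,
    Nat.add_sub_add_right, add_right_comm m 1 j, add_assoc m j 1]
  push_cast
  field_simp
  ring

theorem neg_poleResidue_div_eq_sum_right (f : ℝ → ℝ) (x : ℝ) {d : ℝ} (hd : d ≠ 0) (m : ℕ) :
    -poleResidue (taylorPowerSeries f x) (-d) (m + 2) (m + 1) / d =
      ∑ j ∈ Finset.range (m + 2), ((m + j).factorial : ℝ) / (j.factorial * (m + 1 - j).factorial) *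
        ((-1) ^ (m + 2) * (m + 1 : ℕ) * iteratedDeriv (m + 1 - j) f x /
          ((m + 1).factorial * d ^ (m + 1 + j + 1))) := by
  rw [poleResidue_succ_succ_eq_sum _ (neg_ne_zero.2 hd), ← Finset.sum_neg_distrib, Finset.sum_div]
  refine Finset.sum_congr rfl fun j _ ↦ ?_
  have sign : (-1 : ℝ) ^ j / (-d) ^ (m + 1 + j) = (-1) ^ (m + 1) / d ^ (m + 1 + j) := by
    rw [neg_pow d, pow_add (-1 : ℝ)]
    field_simp
    rw [← pow_mul, mul_comm, pow_mul, neg_one_sq, one_pow]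
  rw [mul_div_right_comm, sign, Nat.cast_add_choose, taylorPowerSeries, coeff_mk,
    Nat.factorial_succ m]
  push_cast
  field_simp
  ring

theorem twoPointCoeffR_eq_twoPointCoeff (f : ℝ → ℝ) {x1 x2 : ℝ} (h12 : x1 ≠ x2) (k : ℕ) :
    twoPointCoeffR f x1 x2 k =
      twoPointCoeff (taylorPowerSeries f x1) (taylorPowerSeries f x2) (x1 - x2) k := by
  have hd : x1 - x2 ≠ 0 := sub_ne_zero.2 h12
  cases k with
  | zero =>
    rw [twoPointCoeff, dividedDiff, poleResidue_zero, zero_add, zero_add, poleResidue_succ_zero,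
      twoPointCoeffR, if_pos rfl, taylorPowerSeries, coeff_mk, iteratedDeriv_zero,
      Nat.factorial_zero, Nat.cast_one, div_one, ← neg_sub x1 x2, div_neg, neg_div]
  | succ m =>
    rw [twoPointCoeff, dividedDiff, neg_add_rev, add_div, neg_poleResidue_div_eq_sum_left f x1 hd,
      neg_poleResidue_div_eq_sum_right f x2 hd, ← Finset.sum_add_distrib, twoPointCoeffR,
      if_neg m.succ_ne_zero]
    refine Finset.sum_congr rfl fun j _ ↦ ?_
    rw [add_right_comm m 1 j, Nat.add_sub_cancel, ← mul_add, ← add_div]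

theorem eval_twoPointPolynomial_taylorPowerSeries (f : ℝ → ℝ) {x1 x2 : ℝ} (h12 : x1 ≠ x2) (n : ℕ)
    (x : ℝ) :
    (twoPointPolynomial (taylorPowerSeries f x1) (taylorPowerSeries f x2) (x1 - x2) n).eval
        (x - x1) =
      ∑ k ∈ Finset.range n,
        (twoPointCoeffR f x1 x2 k * (x - x1) + twoPointCoeffR f x2 x1 k * (x - x2)) *
          ((x - x1) * (x - x2)) ^ k := by
  simp [twoPointPolynomial, Polynomial.eval_finsetSum, twoPointCoeffR_eq_twoPointCoeff f h12,
    twoPointCoeffR_eq_twoPointCoeff f h12.symm]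

end Coefficients

theorem isLittleO_sub_twoPointTaylor_left {f : ℝ → ℝ} {x1 x2 : ℝ} (h12 : x1 ≠ x2) {m : ℕ}
    (hf : ContDiffAt ℝ m f x1) :
    (fun x ↦ f x - ∑ k ∈ Finset.range (m + 1),
        (twoPointCoeffR f x1 x2 k * (x - x1) + twoPointCoeffR f x2 x1 k * (x - x2)) *
          ((x - x1) * (x - x2)) ^ k)
      =o[𝓝 x1] fun x ↦ (x - x1) ^ m := by
  simp only [← eval_twoPointPolynomial_taylorPowerSeries f h12]
  exact isLittleO_sub_eval_of_coeff_eq hf fun _ ↦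
    coeff_twoPointPolynomial _ _ (sub_ne_zero.2 h12)

/-- The remainder of the two-point Taylor polynomial of degree `2n−1` is
`o((x−x1)^{n−1})` as `x → x1` and `o((x−x2)^{n−1})` as `x → x2`,
provided `f` is `(n−1)`-times continuously differentiable near `x1` and `x2`. -/
theorem twoPointTaylorPolynomial_remainder_littleO
    (x1 x2 : ℝ) (h12 : x1 ≠ x2) (n : ℕ) (hn : 1 ≤ n) (f : ℝ → ℝ)
    (hf1 : ContDiffAt ℝ (n - 1 : ℕ) f x1) (hf2 : ContDiffAt ℝ (n - 1 : ℕ) f x2) :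
    (fun x : ℝ => f x - ∑ k ∈ Finset.range n,
        (twoPointCoeffR f x1 x2 k * (x - x1) + twoPointCoeffR f x2 x1 k * (x - x2)) *
          ((x - x1) * (x - x2)) ^ k)
      =o[nhds x1] (fun x : ℝ => (x - x1) ^ (n - 1)) ∧
    (fun x : ℝ => f x - ∑ k ∈ Finset.range n,
        (twoPointCoeffR f x1 x2 k * (x - x1) + twoPointCoeffR f x2 x1 k * (x - x2)) *
          ((x - x1) * (x - x2)) ^ k)
      =o[nhds x2] (fun x : ℝ => (x - x2) ^ (n - 1)) := by
  obtain ⟨m, rfl⟩ := Nat.exists_eq_add_of_le' hn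
  rw [Nat.add_sub_cancel] at hf1 hf2 ⊢
  refine ⟨isLittleO_sub_twoPointTaylor_left h12 hf1, ?_⟩
  refine (isLittleO_sub_twoPointTaylor_left h12.symm hf2).congr_left fun x ↦ ?_
  simp only [add_comm (twoPointCoeffR f x2 x1 _ * _), mul_comm (x - x2)]
end

section
/- Let x1 ≠ x2 be real numbers, n ≥ 1, and let f : ℝ → ℝ be n-times continuously differentiable on a neighborhood of x1 and (n−1)-times continuously differentiable on a neighborhood of x2. Let P_n(x) = Σ_{k=0}^{n−1} [a_k(x1,x2)(x−x1) + a_k(x2,x1)(x−x2)]·((x−x1)(x−x2))^k be the two-point Taylor polynomial and set r_n(x) = f(x) − P_n(x). Then r_n(x) = O((x−x1)^{n}) as x → x1. -/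
/-!
In the variable `t = (x - x₁) / (x₁ - x₂)` the nodes are `0` and `-1`, and the claim becomes a
congruence modulo `t ^ n` between the two-point Taylor polynomial and the Taylor polynomial at `0`.
Both sides are linear in the derivatives prescribed at the nodes. In a ring with `t ^ n = 0`, put
`w = -t (1 + t)` and `S m = ∑ j, (m + 2 j).choose j * w ^ j`. Pascal's rule
`S (m + 1) = S m + w * S (m + 2)` says that `e m = S m - (1 + t) * S (m + 1)` satisfies
`e m = -t * e (m + 1)`, so `e` vanishes by nilpotency. Hence `S m = (1 + t) * S (m + 1)`, and with
`(1 + 2 t) * S 0 = 1` the coefficients of each prescribed derivative can be summed in closed form.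
-/

open Finset Asymptotics Polynomial
open scoped Nat Topology

section Sums

theorem sum_range_mul_pow_eq_add_mul_sum {R : Type*} [CommSemiring R] {w : R} {n : ℕ}
    (hw : w ^ n = 0) (c : ℕ → R) :
    ∑ j ∈ range n, c j * w ^ j = c 0 + w * ∑ j ∈ range n, c (j + 1) * w ^ j := by
  calc ∑ j ∈ range n, c j * w ^ j
      = ∑ j ∈ range (n + 1), c j * w ^ j := by rw [sum_range_succ, hw, mul_zero, add_zero]
    _ = ∑ j ∈ range n, c (j + 1) * w ^ (j + 1) + c 0 := by
        rw [sum_range_succ', pow_zero, mul_one]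
    _ = c 0 + w * ∑ j ∈ range n, c (j + 1) * w ^ j := by
        rw [add_comm, mul_sum]
        exact congrArg _ (sum_congr rfl fun j _ => by ring)

theorem sum_range_sum_antidiagonal_eq_sum_range_sum_range {M : Type*} [AddCommMonoid M]
    {F : ℕ → ℕ → M} {n : ℕ} (hF : ∀ i j, n ≤ i + j → F i j = 0) :
    ∑ k ∈ range n, ∑ p ∈ antidiagonal k, F p.1 p.2 = ∑ i ∈ range n, ∑ j ∈ range n, F i j := by
  simp only [Nat.sum_antidiagonal_eq_sum_range_succ F, Nat.succ_eq_add_one]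
  rw [sum_range_diag_flip n F]
  refine sum_congr rfl fun i _ => sum_subset (range_subset_range.2 (n.sub_le i)) fun j _ hj => ?_
  exact hF i j (by rw [mem_range] at hj; lia)

end Sums

section PascalParents

/-- The left parent `(m + 2j - 1).choose (j - 1)` of `(m + 2j).choose j` in Pascal's triangle, equal
to `0` for `j = 0`. It weighs the `m`-th Taylor coefficient at a node `a` in the coefficient of
`(x - a) * ((x - a) * (x - b)) ^ (j + m)` in a two-point Taylor polynomial. -/
def leftParent : ℕ → ℕ → ℕ
  | 0, _ => 0
  | j + 1, m => (m + 1 + 2 * j).choose j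

/-- The right parent `(m + 2j - 1).choose j` of `(m + 2j).choose j` in Pascal's triangle. It weighs
the `m`-th Taylor coefficient at a node `b` in the coefficient of
`(x - a) * ((x - a) * (x - b)) ^ (j + m)` in a two-point Taylor polynomial. For `j = m = 0`
truncated subtraction makes it `1`, as needed. -/
def rightParent (j m : ℕ) : ℕ := (m + 2 * j - 1).choose j

theorem leftParent_add_rightParent (j m : ℕ) :
    leftParent j m + rightParent j m = (m + 2 * j).choose j := by
  cases j with
  | zero => simp [leftParent, rightParent]
  | succ j =>
    simp only [leftParent, rightParent]
    rw [show m + 2 * (j + 1) - 1 = m + 1 + 2 * j by lia,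
      show m + 2 * (j + 1) = m + 1 + 2 * j + 1 by lia, Nat.choose_succ_succ]

theorem leftParent_mul_factorial_mul_factorial (j m : ℕ) :
    leftParent j m * (j ! * (j + m)!) = (j + m + j - 1)! * j := by
  cases j with
  | zero => simp [leftParent]
  | succ j =>
    have h := Nat.add_choose_mul_factorial_mul_factorial (j + 1 + m) j
    rw [leftParent, show m + 1 + 2 * j = j + 1 + m + j by lia,
      show j + 1 + m + (j + 1) - 1 = j + 1 + m + j by lia, Nat.factorial_succ j, ← h]
    ring

theorem rightParent_mul_factorial_mul_factorial {j m : ℕ} (h : j + m ≠ 0) :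
    rightParent j m * (j ! * (j + m)!) = (j + m + j - 1)! * (j + m) := by
  obtain ⟨l, hl⟩ := Nat.exists_eq_add_one_of_ne_zero h
  have hchoose := Nat.add_choose_mul_factorial_mul_factorial l j
  rw [rightParent, show m + 2 * j - 1 = l + j by lia, show j + m + j - 1 = l + j by lia, hl,
    Nat.factorial_succ l, ← hchoose]
  ring

end PascalParents

section BinomialSum

variable {R : Type*} [CommSemiring R]

/-- The truncated series `∑ j < n, (m + 2j).choose j * w ^ j`. For `w = -t (1 + t)` the full series
is `1 / ((1 + 2 t) * (1 + t) ^ m)`. -/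
def binomialSum (n : ℕ) (w : R) (m : ℕ) : R :=
  ∑ j ∈ range n, ((m + 2 * j).choose j : R) * w ^ j

variable {n : ℕ} {w : R}

theorem binomialSum_succ_of_pow_eq_zero (hw : w ^ n = 0) (m : ℕ) :
    binomialSum n w (m + 1) = binomialSum n w m + w * binomialSum n w (m + 2) := by
  have pascal (j : ℕ) : ((m + 1 + 2 * (j + 1)).choose (j + 1) : R)
      = (m + 2 * (j + 1)).choose (j + 1) + (m + 2 + 2 * j).choose j := by
    rw [show m + 1 + 2 * (j + 1) = m + 2 + 2 * j + 1 by ring,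
      show m + 2 * (j + 1) = m + 2 + 2 * j by ring, Nat.choose_succ_succ, Nat.cast_add, add_comm]
  simp only [binomialSum]
  rw [sum_range_mul_pow_eq_add_mul_sum hw fun j => ((m + 1 + 2 * j).choose j : R),
    sum_range_mul_pow_eq_add_mul_sum hw fun j => ((m + 2 * j).choose j : R)]
  simp only [pascal, add_mul, sum_add_distrib, Nat.choose_zero_right]
  ring

theorem binomialSum_zero_of_pow_eq_zero (hw : w ^ n = 0) :
    binomialSum n w 0 = 1 + 2 * w * binomialSum n w 1 := by
  have central (j : ℕ) :
      ((0 + 2 * (j + 1)).choose (j + 1) : R) = 2 * ((1 + 2 * j).choose j : R) := by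
    rw [show 0 + 2 * (j + 1) = 2 * j + 1 + 1 by ring, Nat.choose_succ_succ,
      Nat.choose_symm_half, add_comm 1, Nat.cast_add, two_mul (Nat.cast _)]
  simp only [binomialSum]
  rw [sum_range_mul_pow_eq_add_mul_sum hw]
  simp only [central, mul_assoc, ← mul_sum, Nat.choose_zero_right, Nat.cast_one]
  ring

theorem sum_leftParent_mul_pow_of_pow_eq_zero (hw : w ^ n = 0) (m : ℕ) :
    ∑ j ∈ range n, (leftParent j m : R) * w ^ j = w * binomialSum n w (m + 1) := by
  rw [sum_range_mul_pow_eq_add_mul_sum hw]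
  simp only [leftParent, Nat.cast_zero, zero_add, binomialSum]

end BinomialSum

section Nilpotent

variable {R : Type*} [CommRing R] {n : ℕ} {t : R}

theorem neg_mul_one_add_pow_eq_zero (ht : t ^ n = 0) : (-(t * (1 + t))) ^ n = 0 := by
  rw [neg_pow, mul_pow, ht, zero_mul, mul_zero]

theorem binomialSum_eq_one_add_mul_succ (ht : t ^ n = 0) (m : ℕ) :
    binomialSum n (-(t * (1 + t))) m = (1 + t) * binomialSum n (-(t * (1 + t))) (m + 1) := by
  set S := binomialSum n (-(t * (1 + t)))
  have defect_step (m : ℕ) :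
      S m - (1 + t) * S (m + 1) = -t * (S (m + 1) - (1 + t) * S (m + 2)) := by
    linear_combination -binomialSum_succ_of_pow_eq_zero (neg_mul_one_add_pow_eq_zero ht) m
  have defect_iterate (i : ℕ) :
      S m - (1 + t) * S (m + 1) = (-t) ^ i * (S (m + i) - (1 + t) * S (m + i + 1)) := by
    induction i with
    | zero => simp
    | succ i ih => rw [ih, defect_step, pow_succ, mul_assoc, add_assoc m i 1, add_assoc m i 2]; rfl
  rw [← sub_eq_zero, defect_iterate n, neg_pow, ht, mul_zero, zero_mul]

theorem one_add_two_mul_mul_pow_mul_binomialSum_eq_one (ht : t ^ n = 0) (m : ℕ) :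
    (1 + 2 * t) * (1 + t) ^ m * binomialSum n (-(t * (1 + t))) m = 1 := by
  induction m with
  | zero =>
    linear_combination binomialSum_zero_of_pow_eq_zero (neg_mul_one_add_pow_eq_zero ht)
      + 2 * t * binomialSum_eq_one_add_mul_succ ht 0
  | succ m ih =>
    linear_combination ih - (1 + 2 * t) * (1 + t) ^ m * binomialSum_eq_one_add_mul_succ ht m

theorem pow_mul_sum_leftParent_add_rightParent_eq_one (ht : t ^ n = 0) (m : ℕ) :
    (1 + t) ^ m * ∑ j ∈ range n,
      (leftParent j m * t + rightParent j m * (1 + t)) * (-(t * (1 + t))) ^ j = 1 := by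
  set w := -(t * (1 + t)) with hw
  have hsum : ∑ j ∈ range n, (leftParent j m * t + rightParent j m * (1 + t)) * w ^ j
      = (1 + t) * binomialSum n w m - w * binomialSum n w (m + 1) := by
    rw [← sum_leftParent_mul_pow_of_pow_eq_zero (neg_mul_one_add_pow_eq_zero ht), binomialSum,
      mul_sum, ← sum_sub_distrib]
    refine sum_congr rfl fun j _ => ?_
    rw [← leftParent_add_rightParent, Nat.cast_add]
    ring
  rw [hsum]
  linear_combination one_add_two_mul_mul_pow_mul_binomialSum_eq_one ht m
    - (1 + t) ^ m * t * binomialSum_eq_one_add_mul_succ ht m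
    - (1 + t) ^ m * binomialSum n w (m + 1) * hw

theorem sum_rightParent_add_leftParent_eq_zero (ht : t ^ n = 0) (m : ℕ) :
    ∑ j ∈ range n,
      (rightParent j m * t + leftParent j m * (1 + t)) * (-(t * (1 + t))) ^ j = 0 := by
  set w := -(t * (1 + t)) with hw
  have hsum : ∑ j ∈ range n, (rightParent j m * t + leftParent j m * (1 + t)) * w ^ j
      = t * binomialSum n w m + w * binomialSum n w (m + 1) := by
    rw [← sum_leftParent_mul_pow_of_pow_eq_zero (neg_mul_one_add_pow_eq_zero ht), binomialSum,
      mul_sum, ← sum_add_distrib]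
    refine sum_congr rfl fun j _ => ?_
    rw [← leftParent_add_rightParent, Nat.cast_add]
    ring
  rw [hsum]
  linear_combination t * binomialSum_eq_one_add_mul_succ ht m + binomialSum n w (m + 1) * hw

end Nilpotent

section NormalizedNodes

variable {R S : Type*} [CommRing R] [CommRing S]

/-- The two-point Taylor coefficient `a_k(0, -1)`. Here `U m` is the `m`-th Taylor coefficient
prescribed at `0`, and `V m` is the one prescribed at `-1` times `-(-1) ^ m`; with this sign
`a_k(-1, 0)` is obtained by exchanging `U` and `V`. -/
def normalizedCoeff (U V : ℕ → R) (k : ℕ) : R :=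
  ∑ p ∈ antidiagonal k,
    (-1) ^ p.1 * (leftParent p.1 p.2 * U p.2 + rightParent p.1 p.2 * V p.2)

/-- The value at `t` of the two-point Taylor polynomial of degree `2n - 1` at the nodes `0` and
`-1`, with the data `U`, `V` encoded as in `normalizedCoeff`. -/
def normalizedInterpolant (n : ℕ) (U V : ℕ → R) (t : R) : R :=
  ∑ k ∈ range n, (normalizedCoeff U V k * t + normalizedCoeff V U k * (1 + t)) * (t * (1 + t)) ^ k

theorem map_normalizedInterpolant (g : R →+* S) (n : ℕ) (U V : ℕ → R) (t : R) :
    g (normalizedInterpolant n U V t)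
      = normalizedInterpolant n (fun m => g (U m)) (fun m => g (V m)) (g t) := by
  simp [normalizedInterpolant, normalizedCoeff]

theorem normalizedCoeff_neg (U V : ℕ → R) (k : ℕ) :
    normalizedCoeff (fun m => -U m) (fun m => -V m) k = -normalizedCoeff U V k := by
  rw [normalizedCoeff, normalizedCoeff, ← sum_neg_distrib]
  exact sum_congr rfl fun p _ => by ring

theorem normalizedInterpolant_eq_sum_antidiagonal (n : ℕ) (U V : ℕ → R) (t : R) :
    normalizedInterpolant n U V t = ∑ k ∈ range n, ∑ p ∈ antidiagonal k,
      (t * (1 + t)) ^ p.2 *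
        (U p.2 * ((leftParent p.1 p.2 * t + rightParent p.1 p.2 * (1 + t)) *
            (-(t * (1 + t))) ^ p.1)
          + V p.2 * ((rightParent p.1 p.2 * t + leftParent p.1 p.2 * (1 + t)) *
            (-(t * (1 + t))) ^ p.1)) := by
  refine sum_congr rfl fun k _ => ?_
  rw [normalizedCoeff, normalizedCoeff, sum_mul, sum_mul, ← sum_add_distrib, sum_mul]
  refine sum_congr rfl fun p hp => ?_
  rw [← mem_antidiagonal.1 hp, pow_add, neg_pow (t * (1 + t)) p.1]
  ring

theorem normalizedInterpolant_of_pow_eq_zero {n : ℕ} {t : R} (ht : t ^ n = 0) (U V : ℕ → R) :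
    normalizedInterpolant n U V t = ∑ m ∈ range n, U m * t ^ m := by
  have hvanish (i m : ℕ) (him : n ≤ i + m) : (t * (1 + t)) ^ m * (t * (1 + t)) ^ i = 0 := by
    rw [← pow_add, mul_pow, add_comm m i, pow_eq_zero_of_le him ht, zero_mul]
  rw [normalizedInterpolant_eq_sum_antidiagonal,
    sum_range_sum_antidiagonal_eq_sum_range_sum_range (F := fun j m => (t * (1 + t)) ^ m *
      (U m * ((leftParent j m * t + rightParent j m * (1 + t)) * (-(t * (1 + t))) ^ j)
        + V m * ((rightParent j m * t + leftParent j m * (1 + t)) * (-(t * (1 + t))) ^ j))),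
    sum_comm]
  · refine sum_congr rfl fun m _ => ?_
    rw [← mul_sum, sum_add_distrib, ← mul_sum, ← mul_sum, sum_rightParent_add_leftParent_eq_zero ht,
      mul_pow]
    linear_combination U m * t ^ m * pow_mul_sum_leftParent_add_rightParent_eq_one ht m
  · intro j m hjm
    rw [neg_pow]
    linear_combination (-1) ^ j *
      (U m * (leftParent j m * t + rightParent j m * (1 + t))
        + V m * (rightParent j m * t + leftParent j m * (1 + t))) * hvanish j m hjm

theorem pow_dvd_normalizedInterpolant_sub_sum (n : ℕ) (U V : ℕ → R) (t : R) :
    t ^ n ∣ normalizedInterpolant n U V t - ∑ m ∈ range n, U m * t ^ m := by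
  set g := Ideal.Quotient.mk (Ideal.span {t ^ n})
  have ht : g t ^ n = 0 := by
    rw [← map_pow, Ideal.Quotient.eq_zero_iff_mem, Ideal.mem_span_singleton]
  rw [← Ideal.mem_span_singleton, ← Ideal.Quotient.eq_zero_iff_mem, map_sub,
    map_normalizedInterpolant, normalizedInterpolant_of_pow_eq_zero ht, sub_eq_zero]
  simp only [map_sum, map_mul, map_pow, g]

theorem exists_polynomial_normalizedInterpolant_sub_sum (n : ℕ) (U V : ℕ → R) :
    ∃ q : R[X], ∀ t : R,
      normalizedInterpolant n U V t - ∑ m ∈ range n, U m * t ^ m = t ^ n * q.eval t := by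
  obtain ⟨q, hq⟩ :=
    pow_dvd_normalizedInterpolant_sub_sum n (fun m => C (U m)) (fun m => C (V m)) (X : R[X])
  refine ⟨q, fun t => ?_⟩
  have heval := congrArg (evalRingHom t) hq
  rw [map_sub, map_normalizedInterpolant] at heval
  simpa [eval_finsetSum] using heval

end NormalizedNodes

section ArbitraryNodes

variable {K : Type*} [Field K]

/-- The two-point Taylor coefficient `a_k(x₁, x₂)` for arbitrary prescribed Taylor coefficients `u`
at `x₁` and `v` at `x₂`, obtained from `normalizedCoeff` by sending the nodes to `0` and `-1`. -/
def twoPointJetCoeff (x₁ x₂ : K) (u v : ℕ → K) (k : ℕ) : K :=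
  normalizedCoeff (fun m => (x₁ - x₂) ^ m * u m) (fun m => -((x₂ - x₁) ^ m * v m)) k
    / (x₁ - x₂) ^ (2 * k + 1)

theorem twoPointJetCoeff_swap (x₁ x₂ : K) (u v : ℕ → K) (k : ℕ) :
    twoPointJetCoeff x₂ x₁ v u k
      = normalizedCoeff (fun m => -((x₂ - x₁) ^ m * v m)) (fun m => (x₁ - x₂) ^ m * u m) k
        / (x₁ - x₂) ^ (2 * k + 1) := by
  have hodd : (x₂ - x₁) ^ (2 * k + 1) = -(x₁ - x₂) ^ (2 * k + 1) := by
    rw [← neg_sub, Odd.neg_pow (odd_two_mul_add_one k)]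
  rw [twoPointJetCoeff, hodd, div_neg, ← neg_div, ← normalizedCoeff_neg]
  simp only [neg_neg]

theorem sum_twoPointJetCoeff_eq_normalizedInterpolant {x₁ x₂ : K} (h : x₁ ≠ x₂) (n : ℕ)
    (u v : ℕ → K) (x : K) :
    ∑ k ∈ range n,
        (twoPointJetCoeff x₁ x₂ u v k * (x - x₁) + twoPointJetCoeff x₂ x₁ v u k * (x - x₂)) *
          ((x - x₁) * (x - x₂)) ^ k
      = normalizedInterpolant n (fun m => (x₁ - x₂) ^ m * u m)
          (fun m => -((x₂ - x₁) ^ m * v m)) ((x - x₁) / (x₁ - x₂)) := by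
  have hd : x₁ - x₂ ≠ 0 := sub_ne_zero.2 h
  obtain ⟨t, rfl⟩ : ∃ t, x = x₁ + (x₁ - x₂) * t := ⟨(x - x₁) / (x₁ - x₂), by field_simp; ring⟩
  have hx₁ : x₁ + (x₁ - x₂) * t - x₁ = (x₁ - x₂) * t := by ring
  have hx₂ : x₁ + (x₁ - x₂) * t - x₂ = (x₁ - x₂) * (1 + t) := by ring
  rw [hx₁, hx₂, mul_div_cancel_left₀ t hd]
  refine sum_congr rfl fun k _ => ?_
  have hpow : ((x₁ - x₂) * t * ((x₁ - x₂) * (1 + t))) ^ k * (x₁ - x₂)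
      = (x₁ - x₂) ^ (2 * k + 1) * (t * (1 + t)) ^ k := by
    rw [pow_succ, pow_mul, mul_right_comm _ (x₁ - x₂), ← mul_pow]
    ring
  rw [twoPointJetCoeff_swap x₁ x₂, twoPointJetCoeff, div_mul_eq_mul_div, div_mul_eq_mul_div,
    ← add_div, div_mul_eq_mul_div, div_eq_iff (pow_ne_zero _ hd)]
  linear_combination
    (normalizedCoeff (fun m => (x₁ - x₂) ^ m * u m) (fun m => -((x₂ - x₁) ^ m * v m)) k * t
      + normalizedCoeff (fun m => -((x₂ - x₁) ^ m * v m)) (fun m => (x₁ - x₂) ^ m * u m) k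
        * (1 + t)) * hpow

theorem exists_polynomial_sum_twoPointJetCoeff_sub_sum {x₁ x₂ : K} (h : x₁ ≠ x₂) (n : ℕ)
    (u v : ℕ → K) :
    ∃ q : K[X], ∀ x : K,
      ∑ k ∈ range n,
          (twoPointJetCoeff x₁ x₂ u v k * (x - x₁) + twoPointJetCoeff x₂ x₁ v u k * (x - x₂)) *
            ((x - x₁) * (x - x₂)) ^ k
        - ∑ m ∈ range n, u m * (x - x₁) ^ m = (x - x₁) ^ n * q.eval x := by
  obtain ⟨q, hq⟩ := exists_polynomial_normalizedInterpolant_sub_sum n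
    (fun m => (x₁ - x₂) ^ m * u m) (fun m => -((x₂ - x₁) ^ m * v m))
  refine ⟨C ((x₁ - x₂) ^ n)⁻¹ * q.comp (C (x₁ - x₂)⁻¹ * (X - C x₁)), fun x => ?_⟩
  have hrescale (m : ℕ) :
      (x₁ - x₂) ^ m * u m * ((x - x₁) / (x₁ - x₂)) ^ m = u m * (x - x₁) ^ m := by
    rw [mul_right_comm, ← mul_pow, mul_div_cancel₀ _ (sub_ne_zero.2 h), mul_comm]
  have hfactor := hq ((x - x₁) / (x₁ - x₂))
  simp only [hrescale] at hfactor
  rw [sum_twoPointJetCoeff_eq_normalizedInterpolant h, hfactor, div_pow]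
  simp only [eval_mul, eval_C, eval_comp, eval_sub, eval_X, div_eq_inv_mul]
  ring

end ArbitraryNodes

section Taylor

variable {E : Type*} [NormedAddCommGroup E] [NormedSpace ℝ E]

/-- The `m`-th coefficient of the Taylor expansion of `f` at `a`. -/
noncomputable def taylorCoeff (f : ℝ → E) (a : ℝ) (m : ℕ) : E :=
  (m ! : ℝ)⁻¹ • iteratedDeriv m f a

theorem sub_sum_taylorCoeff_isBigO {f : ℝ → E} {a : ℝ} {n : ℕ} (hf : ContDiffAt ℝ n f a) :
    (fun x => f x - ∑ m ∈ range n, (x - a) ^ m • taylorCoeff f a m)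
      =O[𝓝 a] fun x => (x - a) ^ n := by
  obtain ⟨ε, hε, hball⟩ := Metric.eventually_nhds_iff_ball.1 (hf.eventually (by simp))
  have ha : a ∈ Metric.ball a ε := Metric.mem_ball_self hε
  have htaylor := (taylor_isLittleO (convex_ball a ε) ha
    fun y hy => (hball y hy).contDiffWithinAt).isBigO
  rw [Metric.isOpen_ball.nhdsWithin_eq ha] at htaylor
  have hlast : (fun x : ℝ => (x - a) ^ n • taylorCoeff f a n) =O[𝓝 a] fun x => (x - a) ^ n := by
    simpa using (isBigO_refl (fun x : ℝ => (x - a) ^ n) (𝓝 a)).smul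
      (isBigO_const_const (taylorCoeff f a n) (one_ne_zero (α := ℝ)) (𝓝 a))
  refine (htaylor.add hlast).congr_left fun x => ?_
  simp only [taylor_within_apply, iteratedDerivWithin_of_isOpen Metric.isOpen_ball ha,
    sum_range_succ, taylorCoeff, smul_smul, mul_comm ((x - a) ^ _)]
  abel

end Taylor

theorem twoPointCoeffR_eq_twoPointJetCoeff (f : ℝ → ℝ) {x₁ x₂ : ℝ} (h : x₁ ≠ x₂) (k : ℕ) :
    twoPointCoeffR f x₁ x₂ k
      = twoPointJetCoeff x₁ x₂ (taylorCoeff f x₁) (taylorCoeff f x₂) k := by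
  have : x₁ - x₂ ≠ 0 := sub_ne_zero.2 h
  rw [twoPointCoeffR, twoPointJetCoeff, normalizedCoeff]
  split_ifs with hk
  · subst hk
    simp [leftParent, rightParent, taylorCoeff, neg_div, ← div_neg]
  rw [← Nat.sum_antidiagonal_eq_sum_range_succ (fun j m => ((k + j - 1)! : ℝ) / (j ! * m !) *
    (((-1) ^ (k + 1) * k * iteratedDeriv m f x₂ + (-1) ^ j * j * iteratedDeriv m f x₁)
      / (k ! * (x₁ - x₂) ^ (k + j + 1)))), sum_div]
  refine sum_congr rfl fun ⟨j, m⟩ hp => ?_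
  obtain rfl : j + m = k := mem_antidiagonal.1 hp
  have hleft : (leftParent j m : ℝ) = (j + m + j - 1)! * j / (j ! * (j + m)!) := by
    rw [eq_div_iff (by positivity)]
    exact_mod_cast leftParent_mul_factorial_mul_factorial j m
  have hright : (rightParent j m : ℝ) = (j + m + j - 1)! * (j + m) / (j ! * (j + m)!) := by
    rw [eq_div_iff (by positivity)]
    exact_mod_cast rightParent_mul_factorial_mul_factorial hk
  have hpow : (x₁ - x₂) ^ (2 * (j + m) + 1) = (x₁ - x₂) ^ m * (x₁ - x₂) ^ (j + m + j + 1) := by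
    rw [← pow_add]; congr 1; ring
  have hneg : (x₂ - x₁) ^ m = (-1) ^ m * (x₁ - x₂) ^ m := by rw [← neg_sub, neg_pow]
  simp only [taylorCoeff, smul_eq_mul, hleft, hright, hpow, hneg]
  push_cast
  field_simp
  ring

theorem twoPointTaylorPolynomial_remainder_bigO_general {x₁ x₂ : ℝ} (h : x₁ ≠ x₂) {n : ℕ}
    {f : ℝ → ℝ} (hf : ContDiffAt ℝ n f x₁) (v : ℕ → ℝ) :
    (fun x : ℝ => f x - ∑ k ∈ range n,
        (twoPointJetCoeff x₁ x₂ (taylorCoeff f x₁) v k * (x - x₁)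
          + twoPointJetCoeff x₂ x₁ v (taylorCoeff f x₁) k * (x - x₂)) *
          ((x - x₁) * (x - x₂)) ^ k)
      =O[𝓝 x₁] fun x => (x - x₁) ^ n := by
  obtain ⟨q, hq⟩ := exists_polynomial_sum_twoPointJetCoeff_sub_sum h n (taylorCoeff f x₁) v
  have hquot : (fun x => (x - x₁) ^ n * q.eval x) =O[𝓝 x₁] fun x => (x - x₁) ^ n := by
    simpa only [mul_one] using
      (isBigO_refl (fun x => (x - x₁) ^ n) (𝓝 x₁)).mul ((q.continuous.tendsto x₁).isBigO_one ℝ)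
  refine ((sub_sum_taylorCoeff_isBigO hf).sub hquot).congr_left fun x => ?_
  rw [← hq x]
  simp only [smul_eq_mul, mul_comm ((x - x₁) ^ _)]
  ring

/-- The remainder of the two-point Taylor polynomial of degree `2n−1` is
`O((x−x1)^n)` as `x → x1`, provided `f` is `n`-times continuously differentiable near
`x1` and `(n−1)`-times continuously differentiable near `x2`. -/
theorem twoPointTaylorPolynomial_remainder_bigO
    (x1 x2 : ℝ) (h12 : x1 ≠ x2) (n : ℕ) (hn : 1 ≤ n) (f : ℝ → ℝ)
    (hf1 : ContDiffAt ℝ (n : ℕ) f x1) (hf2 : ContDiffAt ℝ (n - 1 : ℕ) f x2) :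
    (fun x : ℝ => f x - ∑ k ∈ Finset.range n,
        (twoPointCoeffR f x1 x2 k * (x - x1) + twoPointCoeffR f x2 x1 k * (x - x2)) *
          ((x - x1) * (x - x2)) ^ k)
      =O[nhds x1] (fun x : ℝ => (x - x1) ^ n) := by
  simpa only [twoPointCoeffR_eq_twoPointJetCoeff f h12,
    twoPointCoeffR_eq_twoPointJetCoeff f h12.symm]
    using twoPointTaylorPolynomial_remainder_bigO_general h12 hf1 (taylorCoeff f x2)
end

section
/- Let z1 ≠ z2 be complex numbers, m1, m2 ≥ 1 natural numbers, and let g1 be analytic at z1 and g2 be analytic at z2. Then for every n ≥ 0, (1/(z2−z1)) · [ (1/(n+m1−1)!) · D^{n+m1−1}( w ↦ g1(w)/(w−z2)^{n+1} )(z1) + (1/(n+m2)!) · D^{n+m2}( w ↦ g2(w)/(w−z1)^{n} )(z2) ] = Σ_{k=0}^{n+m1−1} C(n+m1−1,k)·(−1)^{k+1}·(n+1)_k·g1^{(n+m1−k−1)}(z1)/((n+m1−1)!·(z1−z2)^{n+k+2}) + Σ_{k=0}^{n+m2} C(n+m2,k)·(−1)^k·(n)_k·g2^{(n+m2−k)}(z2)/((n+m2)!·(z2−z1)^{n+k+1}).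 -/
/-!
Each residue is expanded by the Leibniz rule, using that the `k`-th derivative of
`(w - a) ^ (-p)` is `(-1) ^ k * (p)_k * (w - a) ^ (-p - k)`. The factor `1 / (z2 - z1)` raises the
power in the denominator by one; at `z1`, where the powers are those of `z1 - z2`, it also flips
the sign.
-/

theorem descPochhammer_eval_neg_eq_ascPochhammer {R : Type*} [Ring R] (r : R) (k : ℕ) :
    (descPochhammer R k).eval (-r) = (-1) ^ k * (ascPochhammer R k).eval r := by
  rw [← neg_neg r, ascPochhammer_eval_neg_eq_descPochhammer, neg_neg, ← mul_assoc,
    ← pow_add, Even.neg_one_pow ⟨k, rfl⟩, one_mul]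

section Pole

open Finset Polynomial

variable {𝕜 : Type*} [NontriviallyNormedField 𝕜]

theorem iteratedDeriv_inv_sub_pow (k p : ℕ) (a z : 𝕜) :
    iteratedDeriv k (fun w => ((w - a) ^ p)⁻¹) z =
      (-1) ^ k * (ascPochhammer 𝕜 k).eval (p : 𝕜) / (z - a) ^ (p + k) :=
  calc
    iteratedDeriv k (fun w => ((w - a) ^ p)⁻¹) z
    _ = iteratedDeriv k (fun w => (w - a) ^ (-p : ℤ)) z := by simp only [zpow_neg, zpow_natCast]
    _ = (∏ i ∈ range k, (((-p : ℤ) : 𝕜) - i)) * (z - a) ^ (-p - k : ℤ) := by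
      rw [iteratedDeriv_comp_sub_const k (fun x : 𝕜 => x ^ (-p : ℤ)), iteratedDeriv_eq_iterate]
      exact iter_deriv_zpow (-p) (z - a) k
    _ = (-1) ^ k * (ascPochhammer 𝕜 k).eval (p : 𝕜) / (z - a) ^ (p + k) := by
      rw [← descPochhammer_eval_eq_prod_range, Int.cast_neg, Int.cast_natCast,
        descPochhammer_eval_neg_eq_ascPochhammer, ← neg_add', ← Nat.cast_add, zpow_neg,
        zpow_natCast, div_eq_mul_inv]

theorem iteratedDeriv_div_sub_pow {N : ℕ} {g : 𝕜 → 𝕜} {a z : 𝕜} (hza : z ≠ a)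
    (hg : ContDiffAt 𝕜 N g z) (p : ℕ) :
    iteratedDeriv N (fun w => g w / (w - a) ^ p) z =
      ∑ k ∈ range (N + 1), (N.choose k : 𝕜) * (-1) ^ k * (ascPochhammer 𝕜 k).eval (p : 𝕜) *
        iteratedDeriv (N - k) g z / (z - a) ^ (p + k) := by
  have contDiffAt_inv : ContDiffAt 𝕜 N (fun w => ((w - a) ^ p)⁻¹) z :=
    ((contDiffAt_id.sub contDiffAt_const).pow p).inv (pow_ne_zero p (sub_ne_zero.2 hza))
  simp only [div_eq_inv_mul (g _)]
  rw [iteratedDeriv_fun_mul contDiffAt_inv hg]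
  refine sum_congr rfl fun k _ => ?_
  rw [iteratedDeriv_inv_sub_pow]
  ring

theorem one_div_sub_mul_iteratedDeriv_div_sub_pow {N : ℕ} {g : 𝕜 → 𝕜} {a z : 𝕜} (hza : z ≠ a)
    (hg : ContDiffAt 𝕜 N g z) (p : ℕ) :
    1 / (z - a) * (1 / (N.factorial : 𝕜) * iteratedDeriv N (fun w => g w / (w - a) ^ p) z) =
      ∑ k ∈ range (N + 1), (N.choose k : 𝕜) * (-1) ^ k * (ascPochhammer 𝕜 k).eval (p : 𝕜) *
        iteratedDeriv (N - k) g z / ((N.factorial : 𝕜) * (z - a) ^ (p + k + 1)) := by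
  rw [iteratedDeriv_div_sub_pow hza hg, mul_sum, mul_sum]
  refine sum_congr rfl fun k _ => ?_
  rw [one_div_mul_eq_div, one_div_mul_eq_div, div_div, div_div,
    mul_left_comm ((z - a) ^ (p + k)), ← pow_succ]

theorem twoPointLaurentB_eq_residue_sum_general [CharZero 𝕜] {z1 z2 : 𝕜} (h12 : z1 ≠ z2)
    {m1 m2 n : ℕ} (hm1 : 1 ≤ m1) {g1 g2 : 𝕜 → 𝕜}
    (hg1 : ContDiffAt 𝕜 (n + m1 - 1 : ℕ) g1 z1) (hg2 : ContDiffAt 𝕜 (n + m2 : ℕ) g2 z2) :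
    (1 / (z2 - z1)) *
      ((1 / (Nat.factorial (n + m1 - 1) : 𝕜)) *
          iteratedDeriv (n + m1 - 1) (fun w => g1 w / (w - z2) ^ (n + 1)) z1
        + (1 / (Nat.factorial (n + m2) : 𝕜)) *
          iteratedDeriv (n + m2) (fun w => g2 w / (w - z1) ^ n) z2)
    = (∑ k ∈ range (n + m1),
        (Nat.choose (n + m1 - 1) k : 𝕜) * (-1 : 𝕜) ^ (k + 1) *
          eval ((n : 𝕜) + 1) (ascPochhammer 𝕜 k) *
          iteratedDeriv (n + m1 - k - 1) g1 z1 /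
          ((Nat.factorial (n + m1 - 1) : 𝕜) * (z1 - z2) ^ (n + k + 2)))
      + (∑ k ∈ range (n + m2 + 1),
        (Nat.choose (n + m2) k : 𝕜) * (-1 : 𝕜) ^ k *
          eval (n : 𝕜) (ascPochhammer 𝕜 k) *
          iteratedDeriv (n + m2 - k) g2 z2 /
          ((Nat.factorial (n + m2) : 𝕜) * (z2 - z1) ^ (n + k + 1))) := by
  have range_length : n + m1 - 1 + 1 = n + m1 := by omega
  rw [mul_add, one_div_sub_mul_iteratedDeriv_div_sub_pow h12.symm hg2, ← neg_sub z1 z2,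
    one_div_neg_eq_neg_one_div, neg_mul, one_div_sub_mul_iteratedDeriv_div_sub_pow h12 hg1,
    range_length, ← sum_neg_distrib]
  congr 1
  refine sum_congr rfl fun k _ => ?_
  rw [Nat.sub_right_comm, Nat.cast_succ, add_right_comm n 1 k, pow_succ (-1 : 𝕜) k]
  ring

end Pole

/-- Explicit formula for the two-point Laurent coefficient `b_n(z1,z2)`:
the sum of the residues at `z1` and `z2` of `g1(w)(w−z1)^{−n−m1}(w−z2)^{−n−1}`
(equivalently of `f(w)(w−z1)^{−n}(w−z2)^{−n−1}`), divided by `(z2−z1)`,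
equals the explicit finite double sum. `(a)_k` is the Pochhammer symbol. -/
theorem twoPointLaurentB_eq_residue_sum
    (z1 z2 : ℂ) (h12 : z1 ≠ z2) (m1 m2 : ℕ) (hm1 : 1 ≤ m1) (hm2 : 1 ≤ m2)
    (g1 g2 : ℂ → ℂ) (hg1 : AnalyticAt ℂ g1 z1) (hg2 : AnalyticAt ℂ g2 z2)
    (n : ℕ) :
    (1 / (z2 - z1)) *
      ((1 / (Nat.factorial (n + m1 - 1) : ℂ)) *
          iteratedDeriv (n + m1 - 1) (fun w => g1 w / (w - z2) ^ (n + 1)) z1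
        + (1 / (Nat.factorial (n + m2) : ℂ)) *
          iteratedDeriv (n + m2) (fun w => g2 w / (w - z1) ^ n) z2)
    = (∑ k ∈ Finset.range (n + m1),
        (Nat.choose (n + m1 - 1) k : ℂ) * (-1 : ℂ) ^ (k + 1) *
          Polynomial.eval ((n : ℂ) + 1) (ascPochhammer ℂ k) *
          iteratedDeriv (n + m1 - k - 1) g1 z1 /
          ((Nat.factorial (n + m1 - 1) : ℂ) * (z1 - z2) ^ (n + k + 2)))
      + (∑ k ∈ Finset.range (n + m2 + 1),
        (Nat.choose (n + m2) k : ℂ) * (-1 : ℂ) ^ k *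
          Polynomial.eval (n : ℂ) (ascPochhammer ℂ k) *
          iteratedDeriv (n + m2 - k) g2 z2 /
          ((Nat.factorial (n + m2) : ℂ) * (z2 - z1) ^ (n + k + 1))) := by
  exact twoPointLaurentB_eq_residue_sum_general h12 hm1 hg1.contDiffAt hg2.contDiffAt
end

section
/- Let Ω ⊆ ℂ be open, z1, z2 ∈ Ω with z1 ≠ z2, m1, m2 ≥ 1 natural numbers, let h : ℂ → ℂ be analytic on Ω, and define f(z) = h(z)/((z−z1)^{m1}(z−z2)^{m2}) on Ω \ {z1, z2}. Let M = max(m1, m2) and define G(z) = f(z) − Σ_{n=0}^{M−1} [c_n(z1,z2)(z−z1) + c_n(z2,z1)(z−z2)]·((z−z1)(z−z2))^{−n−1} on Ω \ {z1, z2}, with c_n as below. Then G extends to a function analytic on all of Ω (the singularities of G at z1 and z2 are removable). -/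
/-- The two-point Laurent coefficient `c_n(z1,z2)`; empty sums (negative upper limit)
are zero, which is automatic from `Finset.range` with truncated subtraction. -/
noncomputable def twoPointLaurentC (g1 g2 : ℂ → ℂ) (z1 z2 : ℂ) (m1 m2 : ℕ) (n : ℕ) : ℂ :=
  -(∑ k ∈ Finset.range (m1 - n - 1),
      (Nat.factorial k : ℂ) * (Nat.choose (m1 - n - 2) k : ℂ) * (Nat.choose n k : ℂ) *
        (z1 - z2) ^ ((n : ℤ) - k - 1) *
        iteratedDeriv (m1 - n - k - 2) g1 z1 / (Nat.factorial (m1 - n - 2) : ℂ))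
  + (∑ k ∈ Finset.range (m2 - n),
      (Nat.factorial k : ℂ) * (Nat.choose (m2 - n - 1) k : ℂ) * (Nat.choose (n + 1) k : ℂ) *
        (z2 - z1) ^ ((n : ℤ) - k) *
        iteratedDeriv (m2 - n - k - 1) g2 z2 / (Nat.factorial (m2 - n - 1) : ℂ))

/-!
Expand the Cauchy kernel at both points at once. With `t = w - z1`, `s = w - z2`,
`d = z1 - z2 = s - t` and `X` standing for `ζ - z1`,
`1 / (t - X) = (s + X) / (t s - X (d + X)) = ∑ₙ (s + X) (X (d + X)) ^ n / (t s) ^ (n + 1)`,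
and `d (s + X) = s (d + X) - t X`. Multiplying by the Taylor series of `g1` at `z1` and reading off
the coefficient of `X ^ (m1 - 1)` turns the left side into the polar part of `f` at `z1` and the
right side into the terms of the subtracted sum that involve `g1`. By symmetry the subtracted sum is
the total polar part of `f` at `z1` and `z2`.
-/

open PowerSeries Filter Topology
open scoped Nat

section Kernel

variable {R : Type*} [CommRing R]

theorem sum_twoPointKernel (t s : Rˣ) (M : ℕ) :
    ∑ n ∈ Finset.range M, C (((t * s)⁻¹ ^ (n + 1) : Rˣ) : R) *
        ((C (s : R) + X) * (X * (C (s - t : R) + X)) ^ n) =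
      invUnitsSub t * (1 - (C ((t * s)⁻¹ : Rˣ).val * (X * (C (s - t : R) + X))) ^ M) := by
  set c : R⟦X⟧ := C ((t * s)⁻¹ : Rˣ).val with hc
  set y : R⟦X⟧ := c * (X * (C (s - t : R) + X)) with hy
  have factor : c * ((C (t : R) - X) * (C (s : R) + X)) = 1 - y := by
    have unit : c * (C (t : R) * C (s : R)) = 1 := by
      rw [hc, ← map_mul, ← map_mul, ← Units.val_mul, Units.inv_mul, map_one]
    rw [hy, map_sub]
    linear_combination unit
  calc
    _ = c * (C (s : R) + X) * ∑ n ∈ Finset.range M, y ^ n := by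
        rw [Finset.mul_sum]
        refine Finset.sum_congr rfl fun n _ ↦ ?_
        rw [hy, mul_pow c, Units.val_pow_eq_pow_val, map_pow, ← hc]
        ring
    _ = invUnitsSub t * ((1 - y) * ∑ n ∈ Finset.range M, y ^ n) := by
        rw [← factor]
        linear_combination
          (-c * (C (s : R) + X) * ∑ n ∈ Finset.range M, y ^ n) * invUnitsSub_mul_sub t
    _ = invUnitsSub t * (1 - y ^ M) := by rw [mul_neg_geom_sum]

theorem coeff_mul_invUnitsSub_eq_sum (A : R⟦X⟧) (t s : Rˣ) {m M : ℕ} (hm : m < M) :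
    coeff m (A * invUnitsSub t) = ∑ n ∈ Finset.range M, (((t * s)⁻¹ ^ (n + 1) : Rˣ) : R) *
      coeff m (A * ((C (s : R) + X) * (X * (C (s - t : R) + X)) ^ n)) := by
  have truncation : X ^ M ∣ A * invUnitsSub t -
      A * (invUnitsSub t * (1 - (C ((t * s)⁻¹ : Rˣ).val * (X * (C (s - t : R) + X))) ^ M)) :=
    ⟨A * invUnitsSub t * (C ((t * s)⁻¹ : Rˣ).val * (C (s - t : R) + X)) ^ M, by
      rw [mul_left_comm (C _), mul_pow X]; ring⟩
  have coeff_eq := X_pow_dvd_iff.1 truncation m hm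
  rw [map_sub, sub_eq_zero, ← sum_twoPointKernel, Finset.mul_sum, map_sum] at coeff_eq
  rw [coeff_eq]
  refine Finset.sum_congr rfl fun n _ ↦ ?_
  rw [mul_left_comm, coeff_C_mul]

end Kernel

section PolarPart

variable {K : Type*} [Field K]

/-- The polar part at `t = 0` of `A(t) / t ^ m`, as a function of `t`. -/
noncomputable def polarPart (A : K⟦X⟧) (m : ℕ) (t : K) : K :=
  (A.trunc m).eval t / t ^ m

/-- The residue at `z1` of `g(ζ) (ζ - z1) ^ (n - m - 1) (ζ - z2) ^ l / (z1 - z2)`, in terms of the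
Taylor series `A` of `g` at `z1` and of `d = z1 - z2`. Here `m + 1` is the
order of the pole being expanded. -/
noncomputable def twoPointResidue (A : K⟦X⟧) (d : K) (m n l : ℕ) : K :=
  d⁻¹ * coeff m (A * (X ^ n * (C d + X) ^ l))

theorem coeff_mul_invUnitsSub_eq_polarPart (A : K⟦X⟧) (m : ℕ) (t : Kˣ) :
    coeff m (A * invUnitsSub t) = polarPart A (m + 1) (t : K) := by
  have pow_div_pow (i : ℕ) (hi : i ≤ m) :
      (t : K) ^ i / t ^ (m + 1) = ((t : K) ^ (m - i + 1))⁻¹ := by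
    rw [show m + 1 = i + (m - i + 1) by omega, pow_add]
    field_simp
  rw [coeff_mul, Finset.Nat.sum_antidiagonal_eq_sum_range_succ_mk, polarPart, ← Polynomial.eval₂_id,
    eval₂_trunc_eq_sum_range, Finset.sum_div]
  refine Finset.sum_congr rfl fun i hi ↦ ?_
  rw [RingHom.id_apply, mul_div_assoc, pow_div_pow i (Finset.mem_range_succ_iff.1 hi)]
  simp

theorem coeff_mul_twoPointKernel (A : K⟦X⟧) {s t : K} (hst : s ≠ t) (m n : ℕ) :
    coeff m (A * ((C s + X) * (X * (C (s - t) + X)) ^ n)) =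
      s * twoPointResidue A (s - t) m n (n + 1) - t * twoPointResidue A (s - t) m (n + 1) n := by
  have clear_denominator : C (s - t) * (A * ((C s + X) * (X * (C (s - t) + X)) ^ n)) =
      C s * (A * (X ^ n * (C (s - t) + X) ^ (n + 1))) -
        C t * (A * (X ^ (n + 1) * (C (s - t) + X) ^ n)) := by
    rw [mul_pow, map_sub]; ring
  have coeff_eq := congrArg (coeff m) clear_denominator
  rw [coeff_C_mul, map_sub (coeff m), coeff_C_mul, coeff_C_mul] at coeff_eq
  have hd : s - t ≠ 0 := sub_ne_zero.2 hst
  rw [twoPointResidue, twoPointResidue]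
  field_simp
  exact coeff_eq

theorem polarPart_eq_sum_twoPointResidue (A : K⟦X⟧) {s t : K} (ht : t ≠ 0) (hs : s ≠ 0)
    (hst : s ≠ t) {m M : ℕ} (hm : m < M) :
    polarPart A (m + 1) t = ∑ n ∈ Finset.range M,
      (s * twoPointResidue A (s - t) m n (n + 1) - t * twoPointResidue A (s - t) m (n + 1) n) *
        (t * s) ^ (-(n : ℤ) - 1) := by
  lift t to Kˣ using ht.isUnit
  lift s to Kˣ using hs.isUnit
  rw [← coeff_mul_invUnitsSub_eq_polarPart, coeff_mul_invUnitsSub_eq_sum A t s hm]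
  refine Finset.sum_congr rfl fun n _ ↦ ?_
  have unit_zpow : ((t : K) * s) ^ (-(n : ℤ) - 1) = ((t * s)⁻¹ ^ (n + 1) : Kˣ) := by
    rw [← neg_add', ← Nat.cast_succ, zpow_neg, zpow_natCast, ← inv_pow]
    push_cast
    rfl
  rw [coeff_mul_twoPointKernel A hst, unit_zpow, mul_comm]

theorem coeff_C_add_X_pow (d : K) (l k : ℕ) :
    coeff k ((C d + X) ^ l) = (l.choose k : K) * d ^ ((l : ℤ) - k) := by
  have coe_eq : ((C d + X) ^ l : K⟦X⟧) = ((Polynomial.X + Polynomial.C d) ^ l : Polynomial K) := by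
    push_cast; rw [add_comm]
  rw [coe_eq, Polynomial.coeff_coe, Polynomial.coeff_X_add_C_pow, mul_comm]
  obtain hk | hk := le_or_gt k l
  · rw [← Nat.cast_sub hk, zpow_natCast]
  · simp [Nat.choose_eq_zero_of_lt hk]

theorem twoPointResidue_eq_sum (A : K⟦X⟧) {d : K} (hd : d ≠ 0) (m n l : ℕ) :
    twoPointResidue A d m n l = ∑ k ∈ Finset.range (m + 1 - n),
      (l.choose k : K) * d ^ ((l : ℤ) - k - 1) * coeff (m - n - k) A := by
  rw [twoPointResidue, mul_left_comm, coeff_X_pow_mul']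
  split_ifs with hn
  · rw [mul_comm A, coeff_mul, Finset.Nat.sum_antidiagonal_eq_sum_range_succ_mk, Finset.mul_sum,
      Nat.succ_eq_add_one, Nat.sub_add_comm hn]
    refine Finset.sum_congr rfl fun k _ ↦ ?_
    rw [coeff_C_add_X_pow, zpow_sub_one₀ hd]
    ring
  · simp [show m + 1 - n = 0 by omega]

end PolarPart

section Analytic

variable {𝕜 : Type*} [NontriviallyNormedField 𝕜]
  {E : Type*} [NormedAddCommGroup E] [NormedSpace 𝕜 E]

variable (𝕜) in
/-- The singularity of `f` at `z` is removable: near `z`, except possibly at `z` itself, `f` agrees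
with a function analytic at `z`. Points at which `f` is analytic are allowed. -/
def HasRemovableSingularityAt (f : 𝕜 → E) (z : 𝕜) : Prop :=
  ∃ ψ : 𝕜 → E, AnalyticAt 𝕜 ψ z ∧ f =ᶠ[𝓝[≠] z] ψ

namespace HasRemovableSingularityAt

theorem of_analyticAt {f : 𝕜 → E} {z : 𝕜} (hf : AnalyticAt 𝕜 f z) :
    HasRemovableSingularityAt 𝕜 f z :=
  ⟨f, hf, .rfl⟩

theorem sub_analyticAt {f g : 𝕜 → E} {z : 𝕜} (hf : HasRemovableSingularityAt 𝕜 f z)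
    (hg : AnalyticAt 𝕜 g z) : HasRemovableSingularityAt 𝕜 (fun w ↦ f w - g w) z :=
  let ⟨ψ, hψ, hfψ⟩ := hf
  ⟨fun w ↦ ψ w - g w, hψ.fun_sub hg, hfψ.sub .rfl⟩

theorem exists_analyticOnNhd_eq {f : 𝕜 → E} {U : Set 𝕜}
    (hf : ∀ z ∈ U, HasRemovableSingularityAt 𝕜 f z) :
    ∃ F : 𝕜 → E, AnalyticOnNhd 𝕜 F U ∧ ∀ z ∈ U, AnalyticAt 𝕜 f z → F z = f z := by
  have meromorphic : MeromorphicOn f U := fun z hz ↦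
    let ⟨_, hψ, hfψ⟩ := hf z hz
    hψ.meromorphicAt.congr hfψ.symm
  refine ⟨toMeromorphicNFOn f U, fun z hz ↦ ?_, fun z hz hfz ↦ ?_⟩
  · obtain ⟨ψ, hψ, hfψ⟩ := hf z hz
    rw [← (meromorphicNFOn_toMeromorphicNFOn f U hz).meromorphicOrderAt_nonneg_iff_analyticAt,
      meromorphicOrderAt_toMeromorphicNFOn meromorphic hz, meromorphicOrderAt_congr hfψ]
    exact hψ.meromorphicOrderAt_nonneg
  · rw [toMeromorphicNFOn_eq_toMeromorphicNFAt meromorphic hz,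
      toMeromorphicNFAt_eq_self.2 hfz.meromorphicNFAt]

end HasRemovableSingularityAt

/-- The Taylor series of `g` at `z`, as a formal power series in `w - z`. -/
noncomputable def taylorSeries (g : 𝕜 → 𝕜) (z : 𝕜) : 𝕜⟦X⟧ :=
  PowerSeries.mk fun i ↦ iteratedDeriv i g z / (i ! : 𝕜)

theorem analyticAt_polarPart_sub (A : 𝕜⟦X⟧) (m : ℕ) {z w : 𝕜} (hw : w ≠ z) :
    AnalyticAt 𝕜 (fun x ↦ polarPart A m (x - z)) w := by
  have analytic_sub : AnalyticAt 𝕜 (fun x ↦ x - z) w := by fun_prop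
  exact (analytic_sub.aeval_polynomial (A.trunc m)).fun_div (analytic_sub.fun_pow m)
    (pow_ne_zero m (sub_ne_zero.2 hw))

theorem hasRemovableSingularityAt_div_pow_sub_polarPart [CharZero 𝕜] [CompleteSpace 𝕜]
    {g : 𝕜 → 𝕜} {z : 𝕜} (hg : AnalyticAt 𝕜 g z) (m : ℕ) :
    HasRemovableSingularityAt 𝕜
      (fun w ↦ g w / (w - z) ^ m - polarPart (taylorSeries g z) m (w - z)) z := by
  have hg_shift : AnalyticAt 𝕜 (fun x ↦ g (x + z)) 0 :=
    AnalyticAt.fun_comp (by simpa using hg) (by fun_prop)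
  obtain ⟨F, hF, taylor⟩ := hg_shift.exists_eq_sum_add_pow_mul m
  refine ⟨fun w ↦ F (w - z), AnalyticAt.fun_comp (by simpa using hF) (by fun_prop), ?_⟩
  filter_upwards [self_mem_nhdsWithin] with w hw
  have hwz : (w - z) ^ m ≠ 0 := pow_ne_zero m (sub_ne_zero.2 hw)
  have taylor_w : g w = (trunc m (taylorSeries g z)).eval (w - z) + (w - z) ^ m * F (w - z) := by
    have taylor_sub := taylor (w - z)
    simp only [sub_add_cancel, smul_eq_mul, iteratedDeriv_comp_add_const, zero_add] at taylor_sub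
    rw [taylor_sub, ← Polynomial.eval₂_id, eval₂_trunc_eq_sum_range]
    congr 1
    refine Finset.sum_congr rfl fun i _ ↦ ?_
    rw [taylorSeries, coeff_mk, RingHom.id_apply]
    ring
  rw [taylor_w, polarPart, add_div, add_sub_cancel_left, mul_div_cancel_left₀ _ hwz]

/-- What is left of `h(w) / ((w - z1) ^ m1 (w - z2) ^ m2)` after its polar parts at `z1` and `z2`
have been subtracted. -/
noncomputable def twoPointRemainder (h : 𝕜 → 𝕜) (z1 z2 : 𝕜) (m1 m2 : ℕ) (w : 𝕜) : 𝕜 :=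
  h w / ((w - z1) ^ m1 * (w - z2) ^ m2) -
    polarPart (taylorSeries (fun x ↦ h x / (x - z2) ^ m2) z1) m1 (w - z1) -
    polarPart (taylorSeries (fun x ↦ h x / (x - z1) ^ m1) z2) m2 (w - z2)

theorem twoPointRemainder_comm (h : 𝕜 → 𝕜) (z1 z2 : 𝕜) (m1 m2 : ℕ) :
    twoPointRemainder h z1 z2 m1 m2 = twoPointRemainder h z2 z1 m2 m1 := by
  ext w
  rw [twoPointRemainder, twoPointRemainder, mul_comm, sub_right_comm]

theorem analyticAt_twoPointRemainder {h : 𝕜 → 𝕜} {z1 z2 w : 𝕜} (hh : AnalyticAt 𝕜 h w)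
    (hw1 : w ≠ z1) (hw2 : w ≠ z2) (m1 m2 : ℕ) :
    AnalyticAt 𝕜 (twoPointRemainder h z1 z2 m1 m2) w := by
  have denominator_ne_zero : (w - z1) ^ m1 * (w - z2) ^ m2 ≠ 0 :=
    mul_ne_zero (pow_ne_zero m1 (sub_ne_zero.2 hw1)) (pow_ne_zero m2 (sub_ne_zero.2 hw2))
  exact ((hh.fun_div (by fun_prop) denominator_ne_zero).fun_sub
    (analyticAt_polarPart_sub _ m1 hw1)).fun_sub (analyticAt_polarPart_sub _ m2 hw2)

variable [CharZero 𝕜] [CompleteSpace 𝕜]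

theorem hasRemovableSingularityAt_twoPointRemainder_left {h : 𝕜 → 𝕜} {z1 z2 : 𝕜}
    (hh : AnalyticAt 𝕜 h z1) (h12 : z1 ≠ z2) (m1 m2 : ℕ) :
    HasRemovableSingularityAt 𝕜 (twoPointRemainder h z1 z2 m1 m2) z1 := by
  have analytic_quotient : AnalyticAt 𝕜 (fun x ↦ h x / (x - z2) ^ m2) z1 :=
    hh.fun_div (by fun_prop) (pow_ne_zero m2 (sub_ne_zero.2 h12))
  have analytic_polarPart := analyticAt_polarPart_sub
    (taylorSeries (fun x ↦ h x / (x - z1) ^ m1) z2) m2 h12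
  simpa only [div_div, mul_comm] using!
    (hasRemovableSingularityAt_div_pow_sub_polarPart analytic_quotient m1).sub_analyticAt
      analytic_polarPart

theorem hasRemovableSingularityAt_twoPointRemainder {h : 𝕜 → 𝕜} {z1 z2 w : 𝕜}
    (hh : AnalyticAt 𝕜 h w) (h12 : z1 ≠ z2) (m1 m2 : ℕ) :
    HasRemovableSingularityAt 𝕜 (twoPointRemainder h z1 z2 m1 m2) w := by
  obtain rfl | hw1 := eq_or_ne w z1
  · exact hasRemovableSingularityAt_twoPointRemainder_left hh h12 m1 m2
  obtain rfl | hw2 := eq_or_ne w z2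
  · rw [twoPointRemainder_comm]
    exact hasRemovableSingularityAt_twoPointRemainder_left hh h12.symm m2 m1
  · exact .of_analyticAt (analyticAt_twoPointRemainder hh hw1 hw2 m1 m2)

end Analytic

section TwoPoint

theorem factorial_mul_choose_mul_div_factorial {K : Type*} [Field K] [CharZero K] {N k : ℕ}
    (hk : k ≤ N) (x y D : K) :
    (k ! : K) * (N.choose k : K) * x * y * D / (N ! : K) = x * y * (D / ((N - k)! : K)) := by
  have choose_eq : (N.choose k : K) * k ! * (N - k)! = N ! := by
    exact_mod_cast Nat.choose_mul_factorial_mul_factorial hk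
  have hN : (N ! : K) ≠ 0 := Nat.cast_ne_zero.2 N.factorial_ne_zero
  have hNk : ((N - k)! : K) ≠ 0 := Nat.cast_ne_zero.2 (N - k).factorial_ne_zero
  rw [mul_div_assoc', div_eq_div_iff hN hNk, ← choose_eq]
  ring

variable {z1 z2 : ℂ}

theorem twoPointLaurentC_eq_sub_twoPointResidue (h12 : z1 ≠ z2) (g1 g2 : ℂ → ℂ) (m1 m2 n : ℕ) :
    twoPointLaurentC g1 g2 z1 z2 (m1 + 1) (m2 + 1) n =
      twoPointResidue (taylorSeries g2 z2) (z2 - z1) m2 n (n + 1) -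
        twoPointResidue (taylorSeries g1 z1) (z1 - z2) m1 (n + 1) n := by
  rw [twoPointLaurentC, twoPointResidue_eq_sum _ (sub_ne_zero.2 h12),
    twoPointResidue_eq_sum _ (sub_ne_zero.2 h12.symm), neg_add_eq_sub,
    show m1 + 1 - n - 1 = m1 + 1 - (n + 1) from rfl]
  congr 1 <;> refine Finset.sum_congr rfl fun k hk ↦ ?_ <;> rw [Finset.mem_range] at hk
  · rw [factorial_mul_choose_mul_div_factorial (by omega), taylorSeries, coeff_mk]
    rw [show m2 + 1 - n - 1 - k = m2 - n - k by omega,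
      show m2 + 1 - n - k - 1 = m2 - n - k by omega, Nat.cast_succ, sub_right_comm,
      add_sub_cancel_right]
  · rw [factorial_mul_choose_mul_div_factorial (by omega), taylorSeries, coeff_mk]
    rw [show m1 + 1 - n - 2 - k = m1 - (n + 1) - k by omega,
      show m1 + 1 - n - k - 2 = m1 - (n + 1) - k by omega]

theorem sum_twoPointLaurentC_eq_polarPart_add (h12 : z1 ≠ z2) (g1 g2 : ℂ → ℂ) (m1 m2 : ℕ) {w : ℂ}
    (hw1 : w ≠ z1) (hw2 : w ≠ z2) :
    ∑ n ∈ Finset.range (max (m1 + 1) (m2 + 1)),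
      (twoPointLaurentC g1 g2 z1 z2 (m1 + 1) (m2 + 1) n * (w - z1)
        + twoPointLaurentC g2 g1 z2 z1 (m2 + 1) (m1 + 1) n * (w - z2)) *
        ((w - z1) * (w - z2)) ^ (-(n : ℤ) - 1) =
      polarPart (taylorSeries g1 z1) (m1 + 1) (w - z1) +
        polarPart (taylorSeries g2 z2) (m2 + 1) (w - z2) := by
  have hd1 : w - z1 ≠ 0 := sub_ne_zero.2 hw1
  have hd2 : w - z2 ≠ 0 := sub_ne_zero.2 hw2
  have hne : w - z1 ≠ w - z2 := fun h ↦ h12 (sub_right_injective h)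
  rw [polarPart_eq_sum_twoPointResidue _ hd1 hd2 hne.symm (le_max_left (m1 + 1) (m2 + 1)),
    polarPart_eq_sum_twoPointResidue _ hd2 hd1 hne (le_max_right (m1 + 1) (m2 + 1)),
    ← Finset.sum_add_distrib]
  refine Finset.sum_congr rfl fun n _ ↦ ?_
  rw [twoPointLaurentC_eq_sub_twoPointResidue h12, twoPointLaurentC_eq_sub_twoPointResidue h12.symm,
    sub_sub_sub_cancel_left, sub_sub_sub_cancel_left, mul_comm (w - z2) (w - z1)]
  ring

end TwoPoint

/-- Subtracting the singular part (built from the `c_n` coefficients) of the two-point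
Laurent expansion of `f = h/((z−z1)^{m1}(z−z2)^{m2})` leaves a function whose
singularities at `z1` and `z2` are removable: it extends analytically to all of `Ω`. -/
theorem twoPointLaurent_removable
    (Ω : Set ℂ) (hΩ : IsOpen Ω) (h : ℂ → ℂ) (hh : DifferentiableOn ℂ h Ω)
    (z1 z2 : ℂ) (hz1 : z1 ∈ Ω) (hz2 : z2 ∈ Ω) (h12 : z1 ≠ z2)
    (m1 m2 : ℕ) (hm1 : 1 ≤ m1) (hm2 : 1 ≤ m2)
    (f g1 g2 : ℂ → ℂ)
    (hfdef : ∀ w, f w = h w / ((w - z1) ^ m1 * (w - z2) ^ m2))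
    (hg1def : ∀ w, g1 w = h w / (w - z2) ^ m2)
    (hg2def : ∀ w, g2 w = h w / (w - z1) ^ m1)
    (G : ℂ → ℂ)
    (hGdef : ∀ w, G w = f w - ∑ n ∈ Finset.range (max m1 m2),
      (twoPointLaurentC g1 g2 z1 z2 m1 m2 n * (w - z1)
        + twoPointLaurentC g2 g1 z2 z1 m2 m1 n * (w - z2)) *
        ((w - z1) * (w - z2)) ^ (-(n : ℤ) - 1)) :
    ∃ G' : ℂ → ℂ, DifferentiableOn ℂ G' Ω ∧ ∀ w ∈ Ω \ {z1, z2}, G' w = G w := by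
  obtain ⟨m1, rfl⟩ := Nat.exists_eq_add_of_le' hm1
  obtain ⟨m2, rfl⟩ := Nat.exists_eq_add_of_le' hm2
  obtain rfl : f = _ := funext hfdef
  obtain rfl : g1 = _ := funext hg1def
  obtain rfl : g2 = _ := funext hg2def
  have analytic (w) (hw : w ∈ Ω) : AnalyticAt ℂ h w := hh.analyticAt (hΩ.mem_nhds hw)
  obtain ⟨G', hG', G'_eq⟩ := HasRemovableSingularityAt.exists_analyticOnNhd_eq fun w hw ↦
    hasRemovableSingularityAt_twoPointRemainder (analytic w hw) h12 (m1 + 1) (m2 + 1)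
  refine ⟨G', hG'.differentiableOn, fun w hw ↦ ?_⟩
  obtain ⟨hw1, hw2⟩ : w ≠ z1 ∧ w ≠ z2 := by simpa using hw.2
  rw [G'_eq w hw.1 (analyticAt_twoPointRemainder (analytic w hw.1) hw1 hw2 _ _), hGdef,
    sum_twoPointLaurentC_eq_polarPart_add h12 _ _ _ _ hw1 hw2, twoPointRemainder, sub_sub]
end
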